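/- arXiv:1008.1856 — 2 statements merged into one kernel-verified Lean document; each statement's English description precedes it below -/
import Mathlib

section
/- For all 1 ≤ l < k ≤ n and every x ∈ U ∩ S^n, the Lie bracket of the vector fields e_k and e_l satisfies [e_k, e_l](x) = (x_{l−1} / √(s_{l−1}(x) s_l(x))) · e_k(x). -/
open scoped InnerProductSpace BigOperators

noncomputable section

/-- `s_j(x) = ∑_{r=j}^n x_r²`. -/
def sfun (n j : ℕ) (x : EuclideanSpace ℝ (Fin (n + 1))) : ℝ :=
  ∑ r : Fin (n + 1), if j ≤ (r : ℕ) then x r ^ 2 else 0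

/-- The `j`-th coordinate of `x` (read as a natural-number index, `0` out of range). -/
def coordfun (n : ℕ) (x : EuclideanSpace ℝ (Fin (n + 1))) (j : ℕ) : ℝ :=
  if h : j < n + 1 then x ⟨j, h⟩ else 0

/-- The vector field `e_j(x) = √(s_j/s_{j-1}) ( −∂_{j−1} + (x_{j−1}/s_j) Σ_{r=j}^n x_r ∂_r )`. -/
def efun (n j : ℕ) (x : EuclideanSpace ℝ (Fin (n + 1))) : EuclideanSpace ℝ (Fin (n + 1)) :=
  WithLp.toLp 2 fun r => Real.sqrt (sfun n j x / sfun n (j - 1) x) *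
    (-(if (r : ℕ) = j - 1 then 1 else 0)
      + coordfun n x (j - 1) / sfun n j x * (if j ≤ (r : ℕ) then x r else 0))

/-- `U = {x ∈ ℝ^{n+1} : x_n > 0}`. -/
def Usph (n : ℕ) : Set (EuclideanSpace ℝ (Fin (n + 1))) := {x | 0 < coordfun n x n}

/-- The unit sphere `S^n ⊂ ℝ^{n+1}`. -/
def sph (n : ℕ) : Set (EuclideanSpace ℝ (Fin (n + 1))) :=
  {x | ∑ r : Fin (n + 1), x r ^ 2 = 1}

/-!
Write `e_j = λ_j E_j - √(s_j / s_{j-1}) ∂_{j-1}`, where `E_j = Σ_{r=j}^n x_r ∂_r` is the radial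
field of the last coordinates and `λ_j = x_{j-1} / √(s_{j-1} s_j)`. Let `l < k`.

The field `e_k` depends only on `x_{k-1}, …, x_n` and is homogeneous of degree `0` in them. As `e_l`
restricts to `λ_l` times the radial field on these coordinates, `D_{e_l} e_k = 0`.

Conversely `e_k(x)` is orthogonal to `x` and involves only the directions `∂_l, …, ∂_n`, so to first
order it changes neither `x_{l-1}` nor `s_{l-1}` nor `s_l`. Hence in `D_{e_k} e_l` only the linear
field `E_l` is differentiated, which gives `D_{e_k} e_l = λ_l e_k`.
-/

section Frame

variable {n j k l : ℕ} {x v : EuclideanSpace ℝ (Fin (n + 1))}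

/-- The truncation `x ↦ (0, …, 0, x_j, …, x_n)`, so that the radial field `Σ_{r=j}^n x_r ∂_r` of
the last coordinates is `tailProj n j x`. -/
def tailProj (n j : ℕ) : EuclideanSpace ℝ (Fin (n + 1)) →L[ℝ] EuclideanSpace ℝ (Fin (n + 1)) :=
  LinearMap.toContinuousLinearMap
    { toFun := fun x => WithLp.toLp 2 fun r => if j ≤ (r : ℕ) then x r else 0
      map_add' := fun x y => by ext r; by_cases h : j ≤ (r : ℕ) <;> simp [h]
      map_smul' := fun a x => by ext r; by_cases h : j ≤ (r : ℕ) <;> simp [h] }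

/-- The constant vector field `∂_i`, indexed by a natural number like `coordfun` (`0` when `i` is
out of range). -/
def coordVec (n i : ℕ) : EuclideanSpace ℝ (Fin (n + 1)) :=
  WithLp.toLp 2 fun r => if (r : ℕ) = i then 1 else 0

/-- The coefficient `x_{j-1} / √(s_{j-1} s_j)` of the radial field `Σ_{r=j}^n x_r ∂_r` in `e_j`. -/
def radialCoeff (n j : ℕ) (x : EuclideanSpace ℝ (Fin (n + 1))) : ℝ :=
  coordfun n x (j - 1) / √(sfun n (j - 1) x * sfun n j x)

lemma tailProj_apply (n j : ℕ) (x : EuclideanSpace ℝ (Fin (n + 1))) (r : Fin (n + 1)) :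
    tailProj n j x r = if j ≤ (r : ℕ) then x r else 0 := rfl

lemma coordVec_apply (n i : ℕ) (r : Fin (n + 1)) :
    coordVec n i r = if (r : ℕ) = i then 1 else 0 := rfl

lemma tailProj_tailProj_of_le (hjk : j ≤ k) (x : EuclideanSpace ℝ (Fin (n + 1))) :
    tailProj n j (tailProj n k x) = tailProj n k x := by
  ext r
  simp only [tailProj_apply]
  split_ifs <;> first | rfl | omega

lemma tailProj_tailProj_of_ge (hkj : k ≤ j) (x : EuclideanSpace ℝ (Fin (n + 1))) :
    tailProj n j (tailProj n k x) = tailProj n j x := by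
  ext r
  simp only [tailProj_apply]
  split_ifs <;> first | rfl | omega

lemma tailProj_coordVec_of_le (hjk : j ≤ k) : tailProj n j (coordVec n k) = coordVec n k := by
  ext r
  simp only [tailProj_apply, coordVec_apply]
  split_ifs <;> first | rfl | omega

lemma tailProj_coordVec_of_lt (hkj : k < j) : tailProj n j (coordVec n k) = 0 := by
  ext r
  simp only [tailProj_apply, coordVec_apply, PiLp.zero_apply]
  split_ifs <;> first | rfl | omega

lemma inner_tailProj_right (j : ℕ) (x y : EuclideanSpace ℝ (Fin (n + 1))) :
    ⟪x, tailProj n j y⟫_ℝ = ⟪tailProj n j x, y⟫_ℝ := by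
  simp only [PiLp.inner_apply, tailProj_apply]
  refine Finset.sum_congr rfl fun r _ => ?_
  split_ifs <;> simp

lemma sfun_eq_norm_sq (n j : ℕ) (x : EuclideanSpace ℝ (Fin (n + 1))) :
    sfun n j x = ‖tailProj n j x‖ ^ 2 := by
  simp [sfun, EuclideanSpace.real_norm_sq_eq, tailProj_apply, ite_pow]

lemma inner_tailProj_self (j : ℕ) (x : EuclideanSpace ℝ (Fin (n + 1))) :
    ⟪x, tailProj n j x⟫_ℝ = sfun n j x := by
  rw [← tailProj_tailProj_of_le le_rfl x, inner_tailProj_right, real_inner_self_eq_norm_sq,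
    sfun_eq_norm_sq]

lemma inner_coordVec (x : EuclideanSpace ℝ (Fin (n + 1))) (i : ℕ) :
    ⟪x, coordVec n i⟫_ℝ = coordfun n x i := by
  by_cases hi : i < n + 1
  · have hr (r : Fin (n + 1)) : (r : ℕ) = i ↔ r = ⟨i, hi⟩ := by rw [Fin.ext_iff]
    simp [PiLp.inner_apply, coordVec_apply, coordfun, hi, hr]
  · have hr (r : Fin (n + 1)) : (r : ℕ) ≠ i := by omega
    simp [PiLp.inner_apply, coordVec_apply, coordfun, hi, hr]

lemma sfun_nonneg (n j : ℕ) (x : EuclideanSpace ℝ (Fin (n + 1))) : 0 ≤ sfun n j x := by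
  rw [sfun_eq_norm_sq]
  positivity

lemma sfun_antitone (x : EuclideanSpace ℝ (Fin (n + 1))) : Antitone fun j => sfun n j x := by
  intro j k hjk
  refine Finset.sum_le_sum fun r _ => ?_
  split_ifs <;> first | omega | exact le_rfl | positivity

lemma sfun_pos_of_mem_Usph (hj : j ≤ n) (hx : x ∈ Usph n) : 0 < sfun n j x := by
  have hxn : 0 < x (Fin.last n) := by simpa [Usph, coordfun, Fin.last] using hx
  refine Finset.sum_pos' (fun r _ => by split_ifs <;> positivity)
    ⟨Fin.last n, Finset.mem_univ _, ?_⟩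
  rw [if_pos (by simpa using hj)]
  positivity

lemma efun_eq (n j : ℕ) (x : EuclideanSpace ℝ (Fin (n + 1))) :
    efun n j x = radialCoeff n j x • tailProj n j x
      - √(sfun n j x / sfun n (j - 1) x) • coordVec n (j - 1) := by
  have hcoeff : √(sfun n j x / sfun n (j - 1) x) * (coordfun n x (j - 1) / sfun n j x)
      = radialCoeff n j x := by
    calc √(sfun n j x / sfun n (j - 1) x) * (coordfun n x (j - 1) / sfun n j x)
        = coordfun n x (j - 1) / √(sfun n (j - 1) x) * (√(sfun n j x) / sfun n j x) := by
          rw [Real.sqrt_div (sfun_nonneg n j x)]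
          ring
      _ = radialCoeff n j x := by
          rw [Real.sqrt_div_self, radialCoeff, Real.sqrt_mul (sfun_nonneg n (j - 1) x)]
          ring
  ext r
  rw [← hcoeff]
  simp only [efun, PiLp.sub_apply, PiLp.smul_apply, smul_eq_mul, tailProj_apply, coordVec_apply]
  ring

lemma inner_self_efun (n j : ℕ) (x : EuclideanSpace ℝ (Fin (n + 1))) :
    ⟪x, efun n j x⟫_ℝ = 0 := by
  rw [efun_eq, inner_sub_right, inner_smul_right, inner_smul_right, inner_tailProj_self,
    inner_coordVec, radialCoeff, Real.sqrt_mul (sfun_nonneg n (j - 1) x),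
    Real.sqrt_div (sfun_nonneg n j x)]
  calc coordfun n x (j - 1) / (√(sfun n (j - 1) x) * √(sfun n j x)) * sfun n j x
        - √(sfun n j x) / √(sfun n (j - 1) x) * coordfun n x (j - 1)
      = coordfun n x (j - 1) / √(sfun n (j - 1) x)
          * (sfun n j x / √(sfun n j x) - √(sfun n j x)) := by ring
    _ = 0 := by rw [Real.div_sqrt, sub_self, mul_zero]

lemma tailProj_efun_of_lt (hjk : j < k) (x : EuclideanSpace ℝ (Fin (n + 1))) :
    tailProj n j (efun n k x) = efun n k x := by
  rw [efun_eq, map_sub, map_smul, map_smul, tailProj_tailProj_of_le hjk.le,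
    tailProj_coordVec_of_le (Nat.le_sub_one_of_lt hjk)]

lemma tailProj_efun_of_ge (hl : 1 ≤ l) (hlj : l ≤ j) (x : EuclideanSpace ℝ (Fin (n + 1))) :
    tailProj n j (efun n l x) = radialCoeff n l x • tailProj n j x := by
  rw [efun_eq, map_sub, map_smul, map_smul, tailProj_tailProj_of_ge hlj,
    tailProj_coordVec_of_lt (by omega), smul_zero, sub_zero]

lemma coordfun_tailProj {i : ℕ} (hji : j ≤ i) (x : EuclideanSpace ℝ (Fin (n + 1))) :
    coordfun n (tailProj n j x) i = coordfun n x i := by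
  rw [← inner_coordVec, ← inner_tailProj_right, tailProj_coordVec_of_le hji, inner_coordVec]

lemma sfun_tailProj {i : ℕ} (hji : j ≤ i) (x : EuclideanSpace ℝ (Fin (n + 1))) :
    sfun n i (tailProj n j x) = sfun n i x := by
  rw [sfun_eq_norm_sq, tailProj_tailProj_of_ge hji, sfun_eq_norm_sq]

lemma efun_tailProj (n k : ℕ) (x : EuclideanSpace ℝ (Fin (n + 1))) :
    efun n k (tailProj n (k - 1) x) = efun n k x := by
  have hk : k - 1 ≤ k := k.sub_le 1
  simp only [efun_eq, radialCoeff, coordfun_tailProj le_rfl, sfun_tailProj le_rfl,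
    sfun_tailProj hk, tailProj_tailProj_of_ge hk]

lemma coordfun_smul (a : ℝ) (x : EuclideanSpace ℝ (Fin (n + 1))) (i : ℕ) :
    coordfun n (a • x) i = a * coordfun n x i := by
  rw [← inner_coordVec, real_inner_smul_left, inner_coordVec]

lemma sfun_smul (a : ℝ) (x : EuclideanSpace ℝ (Fin (n + 1))) (j : ℕ) :
    sfun n j (a • x) = a ^ 2 * sfun n j x := by
  rw [sfun_eq_norm_sq, map_smul, norm_smul, mul_pow, Real.norm_eq_abs, sq_abs, sfun_eq_norm_sq]

lemma efun_smul {a : ℝ} (ha : a ≠ 0) (k : ℕ) (x : EuclideanSpace ℝ (Fin (n + 1))) :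
    efun n k (a • x) = efun n k x := by
  ext r
  simp only [efun, sfun_smul, coordfun_smul, PiLp.smul_apply, smul_eq_mul, ← mul_ite_zero]
  rw [mul_div_mul_left _ _ (pow_ne_zero 2 ha)]
  congr 2
  field_simp

lemma differentiable_sfun (n j : ℕ) : Differentiable ℝ (sfun n j) := by
  rw [funext (sfun_eq_norm_sq n j)]
  exact (tailProj n j).differentiable.norm_sq ℝ

lemma differentiable_coordfun (n i : ℕ) : Differentiable ℝ fun x => coordfun n x i := by
  simp only [← inner_coordVec]
  exact differentiable_id.inner ℝ (differentiable_const _)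

lemma differentiableAt_efun (hx : 0 < sfun n j x) : DifferentiableAt ℝ (efun n j) x := by
  have hx' : 0 < sfun n (j - 1) x := hx.trans_le (sfun_antitone x (j.sub_le 1))
  have hs := (differentiable_sfun n j) x
  have hs' := (differentiable_sfun n (j - 1)) x
  rw [funext (efun_eq n j)]
  have hcoeff : DifferentiableAt ℝ (radialCoeff n j) x :=
    ((differentiable_coordfun n (j - 1)) x).fun_mul
      (((hs'.fun_mul hs).sqrt (by positivity)).fun_inv (by positivity))
  have hratio : DifferentiableAt ℝ (fun y => √(sfun n j y / sfun n (j - 1) y)) x :=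
    (hs.fun_mul (hs'.fun_inv hx'.ne')).sqrt (mul_pos hx (inv_pos.2 hx')).ne'
  exact (hcoeff.fun_smul (tailProj n j).differentiableAt).fun_sub (hratio.smul_const _)

lemma fderiv_efun_self (hx : 0 < sfun n k x) : fderiv ℝ (efun n k) x x = 0 := by
  rw [← (differentiableAt_efun hx).lineDeriv_eq_fderiv]
  refine HasLineDerivAt.lineDeriv ?_
  have hne : ∀ᶠ t : ℝ in nhds 0, 1 + t ≠ 0 :=
    (by fun_prop : ContinuousAt (fun t : ℝ => 1 + t) 0).eventually_ne (by simp)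
  refine (hasDerivAt_const (0 : ℝ) (efun n k x)).congr_of_eventuallyEq ?_
  filter_upwards [hne] with t ht
  rw [← efun_smul ht k x, add_smul, one_smul]

lemma fderiv_efun_eq_fderiv_tailProj (hx : 0 < sfun n k x) (v : EuclideanSpace ℝ (Fin (n + 1))) :
    fderiv ℝ (efun n k) x v
      = fderiv ℝ (efun n k) (tailProj n (k - 1) x) (tailProj n (k - 1) v) := by
  have hd : DifferentiableAt ℝ (efun n k) (tailProj n (k - 1) x) :=
    differentiableAt_efun (by rwa [sfun_tailProj (k.sub_le 1)])
  have hcomp := hd.hasFDerivAt.comp x (tailProj n (k - 1)).hasFDerivAt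
  rw [show efun n k ∘ tailProj n (k - 1) = efun n k from funext (efun_tailProj n k)] at hcomp
  rw [hcomp.fderiv, ContinuousLinearMap.comp_apply]

lemma fderiv_efun_efun_of_lt (hl : 1 ≤ l) (hlk : l < k) (hx : 0 < sfun n k x) :
    fderiv ℝ (efun n k) x (efun n l x) = 0 := by
  rw [fderiv_efun_eq_fderiv_tailProj hx, tailProj_efun_of_ge hl (Nat.le_sub_one_of_lt hlk),
    map_smul, fderiv_efun_self (by rwa [sfun_tailProj (k.sub_le 1)]), smul_zero]

lemma hasLineDerivAt_sfun (n j : ℕ) (x v : EuclideanSpace ℝ (Fin (n + 1))) :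
    HasLineDerivAt ℝ (sfun n j) (2 * ⟪x, tailProj n j v⟫_ℝ) x v := by
  have hinner : ⟪tailProj n j x, tailProj n j v⟫_ℝ = ⟪x, tailProj n j v⟫_ℝ := by
    rw [← inner_tailProj_right, tailProj_tailProj_of_le le_rfl]
  rw [funext (sfun_eq_norm_sq n j), ← hinner]
  simpa using (tailProj n j).hasFDerivAt (x := x) |>.norm_sq.hasLineDerivAt v

lemma hasLineDerivAt_efun_of_inner_eq_zero (hl : 1 ≤ l) (hx : 0 < sfun n l x)
    (hv : tailProj n l v = v) (hxv : ⟪x, v⟫_ℝ = 0) :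
    HasLineDerivAt ℝ (efun n l) (radialCoeff n l x • v) x v := by
  have hx' : 0 < sfun n (l - 1) x := hx.trans_le (sfun_antitone x (l.sub_le 1))
  have hs : HasDerivAt (fun t : ℝ => sfun n l (x + t • v)) 0 0 := by
    simpa [HasLineDerivAt, hv, hxv] using hasLineDerivAt_sfun n l x v
  have hv' : tailProj n (l - 1) v = v := by rw [← hv, tailProj_tailProj_of_le (l.sub_le 1)]
  have hs' : HasDerivAt (fun t : ℝ => sfun n (l - 1) (x + t • v)) 0 0 := by
    simpa [HasLineDerivAt, hv', hxv] using hasLineDerivAt_sfun n (l - 1) x v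
  have hcoord (t : ℝ) : coordfun n (x + t • v) (l - 1) = coordfun n x (l - 1) := by
    rw [← inner_coordVec, ← hv, inner_add_left, real_inner_smul_left, ← inner_tailProj_right,
      tailProj_coordVec_of_lt (by omega), inner_zero_right, mul_zero, add_zero, inner_coordVec]
  have hcoeff : HasDerivAt (fun t : ℝ => radialCoeff n l (x + t • v)) 0 0 := by
    simp only [radialCoeff, hcoord]
    have hsqrt := (hs'.fun_mul hs).sqrt (by simpa using ⟨hx'.ne', hx.ne'⟩)
    simpa using (hasDerivAt_const (0 : ℝ) (coordfun n x (l - 1))).fun_div hsqrt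
      (by simpa using (Real.sqrt_pos.2 (mul_pos hx' hx)).ne')
  have hratio : HasDerivAt
      (fun t : ℝ => √(sfun n l (x + t • v) / sfun n (l - 1) (x + t • v))) 0 0 := by
    simpa using (hs.fun_div hs' (by simpa using hx'.ne')).sqrt
      (by simpa using ⟨hx.ne', hx'.ne'⟩)
  have htail : HasDerivAt (fun t : ℝ => tailProj n l (x + t • v)) v 0 := by
    simpa [HasLineDerivAt, hv] using (tailProj n l).hasFDerivAt (x := x) |>.hasLineDerivAt v
  simp only [HasLineDerivAt, efun_eq]
  simpa using (hcoeff.fun_smul htail).fun_sub (hratio.smul_const (coordVec n (l - 1)))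

lemma fderiv_efun_efun_of_gt (hl : 1 ≤ l) (hlk : l < k) (hx : 0 < sfun n l x) :
    fderiv ℝ (efun n l) x (efun n k x) = radialCoeff n l x • efun n k x := by
  rw [← (differentiableAt_efun hx).lineDeriv_eq_fderiv]
  exact (hasLineDerivAt_efun_of_inner_eq_zero hl hx (tailProj_efun_of_lt hlk x)
    (inner_self_efun n k x)).lineDeriv

theorem statement6_general (hl : 1 ≤ l) (hlk : l < k) (hx : 0 < sfun n k x) :
    VectorField.lieBracket ℝ (efun n k) (efun n l) x
      = (coordfun n x (l - 1) / √(sfun n (l - 1) x * sfun n l x)) • efun n k x := by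
  have hxl : 0 < sfun n l x := hx.trans_le (sfun_antitone x hlk.le)
  rw [VectorField.lieBracket, fderiv_efun_efun_of_gt hl hlk hxl, fderiv_efun_efun_of_lt hl hlk hx,
    sub_zero, radialCoeff]

end Frame

/-- For `1 ≤ l < k ≤ n` and `x ∈ U ∩ S^n`, the Lie bracket
`[e_k, e_l](x) = D_{e_k(x)} e_l(x) − D_{e_l(x)} e_k(x)` equals
`(x_{l−1} / √(s_{l−1}(x) s_l(x))) · e_k(x)`. -/
theorem statement6 (n l k : ℕ) (hl : 1 ≤ l) (hlk : l < k) (hk : k ≤ n)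
    (x : EuclideanSpace ℝ (Fin (n + 1))) (hxU : x ∈ Usph n) (hxS : x ∈ sph n) :
    fderiv ℝ (efun n l) x (efun n k x) - fderiv ℝ (efun n k) x (efun n l x)
      = (coordfun n x (l - 1) / Real.sqrt (sfun n (l - 1) x * sfun n l x)) • efun n k x :=
  statement6_general hl hlk (sfun_pos_of_mem_Usph hk hxU)
end
end

section
/- Let p = (x, x̂, A) with x ∈ U ∩ S^n, x̂ ∈ ℝ^n, and A ∈ SO(n) (AᵀA = 1, det A = 1). Then the n(n+3)/2 vectors {X_k(p)}_{k=1}^n ∪ {Y_{lk}(p)}_{1≤l<k≤n} ∪ {Z_k(p)}_{k=1}^n are linearly independent, and their span equals {v ∈ ℝ^{n+1} : ⟨v, x⟩ = 0} × ℝ^n × {A B : B ∈ M_n(ℝ), Bᵀ = −B}, i.e. the full tangent space of S^n × ℝ^n × SO(n) at p. (Consequently the rolling distribution spanned by X_1, …, X_n is bracket generating of step 3, and the kinematic system of S^n rolling over ℝ^n without twisting or slipping is completely controllable.) -/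
/-!
The first components `e_k(x)` are in echelon form: `e_k` has no `∂_r`-component for `r < k - 1` and
a nonzero one for `r = k - 1`. Being orthogonal to `x`, these `n` independent vectors span `x^⊥`.
The remaining fields have no first component. There the `A ε_k` are the columns of `A`, and the
`A (E_{lk} - E_{kl})` are the left translate of a basis of `𝔰𝔬(n)`. The rotational part of `X_k`
already lies in `A · 𝔰𝔬(n)`, so the whole system is block triangular for the splitting
`ℝ^{n+1} × (ℝ^n × M_n(ℝ))`.
-/

open scoped InnerProductSpace BigOperators
open Matrix

noncomputable section

attribute [local instance] Matrix.normedAddCommGroup Matrix.normedSpace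

/-- The ambient space of the trivialized configuration space
`Ω = U × ℝ^n × M_n(ℝ) ⊂ ℝ^{n+1} × ℝ^n × M_n(ℝ)`. -/
abbrev Conf (n : ℕ) :=
  EuclideanSpace ℝ (Fin (n + 1)) × EuclideanSpace ℝ (Fin n) × Matrix (Fin n) (Fin n) ℝ

/-- The elementary matrix `E_{ik}` with `1`-based indices `i, k`. -/
def Emat (n i k : ℕ) : Matrix (Fin n) (Fin n) ℝ :=
  Matrix.of fun a b => if (a : ℕ) + 1 = i ∧ (b : ℕ) + 1 = k then 1 else 0

/-- The standard basis vector `ε_k` of `ℝ^n`, with a `1`-based index `k`. -/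
def eps (n k : ℕ) : EuclideanSpace ℝ (Fin n) :=
  WithLp.toLp 2 fun i => if (i : ℕ) + 1 = k then 1 else 0

/-- The rolling vector field
`X_k(x, x̂, A) = (e_k(x), A ε_k, −Σ_{i=1}^{k−1} (x_{i−1}/√(s_{i−1} s_i)) A (E_{ik} − E_{ki}))`. -/
def Xfield (n k : ℕ) : Conf n → Conf n := fun p =>
  (efun n k p.1, WithLp.toLp 2 (p.2.2.mulVec (eps n k).ofLp),
    -∑ i ∈ Finset.Icc 1 (k - 1),
      (coordfun n p.1 (i - 1) / Real.sqrt (sfun n (i - 1) p.1 * sfun n i p.1)) •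
        (p.2.2 * (Emat n i k - Emat n k i)))

/-- `Y_{lk}(x, x̂, A) = (0, 0, A(E_{lk} − E_{kl}))`. -/
def Yfield (n l k : ℕ) : Conf n → Conf n := fun p =>
  (0, 0, p.2.2 * (Emat n l k - Emat n k l))

/-- `Z_k(x, x̂, A) = (0, A ε_k, 0)`. -/
def Zfield (n k : ℕ) : Conf n → Conf n := fun p =>
  (0, WithLp.toLp 2 (p.2.2.mulVec (eps n k).ofLp), 0)

/-- The index set for the `n(n+3)/2` vectors
`{X_k}_{k=1}^n ∪ {Y_{lk}}_{1≤l<k≤n} ∪ {Z_k}_{k=1}^n` (indices are `0`-based here and shifted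
by one when fed to the `1`-based fields). -/
def RollIdx (n : ℕ) := Fin n ⊕ {q : Fin n × Fin n // q.1 < q.2} ⊕ Fin n

/-- The family of vectors `{X_k(p)} ∪ {Y_{lk}(p)} ∪ {Z_k(p)}` at a point `p`. -/
def rollFam (n : ℕ) (p : Conf n) : RollIdx n → Conf n
  | Sum.inl k => Xfield n ((k : ℕ) + 1) p
  | Sum.inr (Sum.inl q) => Yfield n ((q.1.1 : ℕ) + 1) ((q.1.2 : ℕ) + 1) p
  | Sum.inr (Sum.inr k) => Zfield n ((k : ℕ) + 1) p

section BlockTriangular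

variable {R M N ι κ : Type*} [Ring R] [AddCommGroup M] [AddCommGroup N] [Module R M] [Module R N]

lemma linearIndependent_sumElim_inr {v : ι → M × N} {w : κ → N}
    (hv : LinearIndependent R (Prod.fst ∘ v)) (hw : LinearIndependent R w) :
    LinearIndependent R (Sum.elim v (LinearMap.inr R M N ∘ w)) := by
  have hfst : LinearIndependent R (LinearMap.fst R M N ∘ v) := hv
  refine hfst.of_comp.sum_type (hw.map' _ Submodule.ker_inr)
    ((Submodule.range_ker_disjoint hfst).mono_right (Submodule.span_le.2 ?_))
  rintro _ ⟨k, rfl⟩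
  simp

lemma span_range_sumElim_inr {v : ι → M × N} {w : κ → N}
    (hvw : ∀ i, (v i).2 ∈ Submodule.span R (Set.range w)) :
    Submodule.span R (Set.range (Sum.elim v (LinearMap.inr R M N ∘ w)))
      = (Submodule.span R (Set.range (Prod.fst ∘ v))).prod (Submodule.span R (Set.range w)) := by
  set V := Submodule.span R (Set.range v)
  set W := Submodule.span R (Set.range w)
  have hfst : Submodule.span R (Set.range (Prod.fst ∘ v)) = V.map (LinearMap.fst R M N) := by
    rw [Submodule.map_span, ← Set.range_comp, LinearMap.coe_fst]
  have hsnd : V ≤ W.comap (LinearMap.snd R M N) :=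
    Submodule.span_le.2 (Set.range_subset_iff.2 hvw)
  rw [Set.Sum.elim_range, Submodule.span_union, Set.range_comp (LinearMap.inr R M N),
    ← Submodule.map_span, hfst]
  apply le_antisymm
  · rintro z hz
    obtain ⟨u, hu, _, ⟨y, hy, rfl⟩, rfl⟩ := Submodule.mem_sup.1 hz
    exact ⟨⟨u, hu, by simp⟩, W.add_mem (hsnd hu) hy⟩
  · rintro z ⟨⟨u, hu, huz⟩, hz⟩
    refine Submodule.mem_sup.2 ⟨u, hu, _, ⟨z.2 - u.2, W.sub_mem hz (hsnd hu), rfl⟩, ?_⟩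
    exact Prod.ext (by simpa using huz) (by simp)

end BlockTriangular

lemma linearIndependent_row_of_isUpperTriangular {K ι : Type*} [Field K] [LinearOrder ι] [Finite ι]
    {M : Matrix ι ι K} (hM : M.IsUpperTriangular) (hdiag : ∀ i, M i i ≠ 0) :
    LinearIndependent K M.row := by
  have := Fintype.ofFinite ι
  rw [linearIndependent_rows_iff_isUnit, isUnit_iff_isUnit_det, det_of_isUpperTriangular hM]
  exact (Finset.prod_ne_zero_iff.2 fun i _ => hdiag i).isUnit

section SkewSingle

variable {R ι : Type*} [Ring R]

/-- The skew-symmetric elementary matrix `E_{lk} - E_{kl}`; for `l < k` these are the standard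
basis of `𝔰𝔬(n)`. -/
def skewSingle (R : Type*) {ι : Type*} [Ring R] [DecidableEq ι] (l k : ι) : Matrix ι ι R :=
  single l k 1 - single k l 1

lemma transpose_skewSingle [DecidableEq ι] (l k : ι) :
    (skewSingle R l k)ᵀ = -skewSingle R l k := by
  simp [skewSingle]

variable [LinearOrder ι]

lemma sum_smul_skewSingle_apply [Fintype ι] (b : {q : ι × ι // q.1 < q.2} → R)
    (q : {q : ι × ι // q.1 < q.2}) :
    (∑ r, b r • skewSingle R r.1.1 r.1.2) q.1.1 q.1.2 = b q := by
  have entry (r : {q : ι × ι // q.1 < q.2}) :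
      skewSingle R r.1.1 r.1.2 q.1.1 q.1.2 = if r = q then 1 else 0 := by
    have hflip : ¬(r.1.2 = q.1.1 ∧ r.1.1 = q.1.2) := fun h =>
      lt_asymm r.2 (h.1 ▸ h.2 ▸ q.2)
    simp [skewSingle, single_apply, hflip, Subtype.ext_iff, Prod.ext_iff]
  simp [Matrix.sum_apply, entry]

lemma linearIndependent_skewSingle [Finite ι] :
    LinearIndependent R fun q : {q : ι × ι // q.1 < q.2} => skewSingle R q.1.1 q.1.2 := by
  have := Fintype.ofFinite ι
  rw [Fintype.linearIndependent_iff]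
  intro b hb q
  rw [← sum_smul_skewSingle_apply b q, hb, Matrix.zero_apply]

end SkewSingle

section SkewMatrices

variable {R ι : Type*} [CommRing R] [Fintype ι]

/-- The skew-symmetric matrices `𝔰𝔬(n)`, i.e. the matrices skew-adjoint for the standard form. -/
def skewMatrices (R ι : Type*) [CommRing R] [DecidableEq ι] [Fintype ι] :
    Submodule R (Matrix ι ι R) :=
  skewAdjointMatricesSubmodule 1

lemma mem_skewMatrices [DecidableEq ι] {B : Matrix ι ι R} : B ∈ skewMatrices R ι ↔ Bᵀ = -B := by
  simp [skewMatrices, Matrix.IsSkewAdjoint, Matrix.IsAdjointPair]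

/-- The left translate `A · 𝔰𝔬(n)`; for `A ∈ SO(n)` this is the tangent space of `SO(n)` at `A`. -/
def leftTranslatedSkew [DecidableEq ι] (A : Matrix ι ι R) : Submodule R (Matrix ι ι R) :=
  (skewMatrices R ι).map (LinearMap.mulLeft R A)

lemma mem_leftTranslatedSkew [DecidableEq ι] {A M : Matrix ι ι R} :
    M ∈ leftTranslatedSkew A ↔ ∃ B : Matrix ι ι R, Bᵀ = -B ∧ M = A * B := by
  simp [leftTranslatedSkew, mem_skewMatrices, eq_comm]

variable [LinearOrder ι] [IsAddTorsionFree R]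

lemma eq_of_mem_skewMatrices_of_upper_eq {B C : Matrix ι ι R}
    (hB : B ∈ skewMatrices R ι) (hC : C ∈ skewMatrices R ι) (h : ∀ i j, i < j → B i j = C i j) :
    B = C := by
  have skew {D : Matrix ι ι R} (hD : D ∈ skewMatrices R ι) (i j : ι) : D i j = -D j i :=
    congrFun (congrFun (mem_skewMatrices.1 hD) j) i
  ext i j
  rcases lt_trichotomy i j with hij | rfl | hji
  · exact h i j hij
  · rw [self_eq_neg.1 (skew hB i i), self_eq_neg.1 (skew hC i i)]
  · rw [skew hB, skew hC, h j i hji]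

lemma span_range_skewSingle :
    Submodule.span R (Set.range fun q : {q : ι × ι // q.1 < q.2} => skewSingle R q.1.1 q.1.2)
      = skewMatrices R ι := by
  have hmem (l k : ι) : skewSingle R l k ∈ skewMatrices R ι :=
    mem_skewMatrices.2 (transpose_skewSingle l k)
  refine le_antisymm (Submodule.span_le.2 (Set.range_subset_iff.2 fun _ => hmem _ _)) fun B hB => ?_
  refine (Submodule.mem_span_range_iff_exists_fun R).2 ⟨fun q => B q.1.1 q.1.2, ?_⟩
  exact eq_of_mem_skewMatrices_of_upper_eq
    (sum_mem fun _ _ => Submodule.smul_mem _ _ (hmem _ _)) hB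
    fun i j hij => sum_smul_skewSingle_apply _ ⟨(i, j), hij⟩

lemma span_range_mul_skewSingle (A : Matrix ι ι R) :
    Submodule.span R (Set.range fun q : {q : ι × ι // q.1 < q.2} => A * skewSingle R q.1.1 q.1.2)
      = leftTranslatedSkew A := by
  rw [leftTranslatedSkew, ← span_range_skewSingle, Submodule.map_span, ← Set.range_comp]
  rfl

end SkewMatrices

section VerticalFamily

variable {ι : Type*} [LinearOrder ι] [Fintype ι]

/-- The components of the fields `Y_{lk}` and `Z_k` in `ℝ^n × M_n(ℝ)`. -/
def verticalFam (A : Matrix ι ι ℝ) :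
    {q : ι × ι // q.1 < q.2} ⊕ ι → EuclideanSpace ℝ ι × Matrix ι ι ℝ :=
  Sum.elim (LinearMap.inr ℝ _ _ ∘ fun q => A * skewSingle ℝ q.1.1 q.1.2)
    (LinearMap.inl ℝ _ _ ∘ fun k => WithLp.toLp 2 (A.col k))

variable {A : Matrix ι ι ℝ}

lemma linearIndependent_toLp_col (hA : IsUnit A) :
    LinearIndependent ℝ fun k => (WithLp.toLp 2 (A.col k) : EuclideanSpace ℝ ι) :=
  (linearIndependent_cols_iff_isUnit.2 hA).map' (WithLp.linearEquiv 2 ℝ _).symm.toLinearMap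
    (LinearEquiv.ker _)

lemma linearIndependent_verticalFam (hA : IsUnit A) : LinearIndependent ℝ (verticalFam A) := by
  have hmul : LinearMap.ker (LinearMap.mulLeft ℝ A) = ⊥ :=
    LinearMap.ker_eq_bot.2 hA.mul_right_injective
  have hY : LinearIndependent ℝ fun q : {q : ι × ι // q.1 < q.2} => A * skewSingle ℝ q.1.1 q.1.2 :=
    (linearIndependent_skewSingle (R := ℝ)).map' (LinearMap.mulLeft ℝ A) hmul
  exact (linearIndependent_equiv' (Equiv.sumComm _ _) Sum.elim_swap).2
    (linearIndependent_inl_union_inr' (linearIndependent_toLp_col hA) hY)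

lemma span_range_verticalFam (hA : IsUnit A) :
    Submodule.span ℝ (Set.range (verticalFam A))
      = (⊤ : Submodule ℝ (EuclideanSpace ℝ ι)).prod (leftTranslatedSkew A) := by
  have hZ := (linearIndependent_toLp_col hA).span_eq_top_of_card_eq_finrank' (by simp)
  rw [verticalFam, Set.Sum.elim_range, Set.range_comp, Set.range_comp, Set.union_comm,
    LinearMap.span_inl_union_inr, hZ, span_range_mul_skewSingle]

end VerticalFamily

section SphereFrame

variable {n : ℕ} {x : EuclideanSpace ℝ (Fin (n + 1))}

lemma sfun_pos {j : ℕ} {r : Fin (n + 1)} (hjr : j ≤ r) (hr : x r ≠ 0) : 0 < sfun n j x := by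
  refine Finset.sum_pos' (fun i _ => by split_ifs <;> positivity) ⟨r, Finset.mem_univ r, ?_⟩
  rw [if_pos hjr]
  positivity

/-- The vector `∑_{r ≥ j} x_r ∂_r`, the projection of `x` to its coordinates from `j` on. -/
def tailPart (j : ℕ) (x : EuclideanSpace ℝ (Fin (n + 1))) : EuclideanSpace ℝ (Fin (n + 1)) :=
  WithLp.toLp 2 fun r => if j ≤ (r : ℕ) then x r else 0

lemma inner_tailPart_self (j : ℕ) : ⟪tailPart j x, x⟫_ℝ = sfun n j x := by
  simp [PiLp.inner_apply, tailPart, sfun, sq]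

lemma efun_succ (k : Fin n) :
    efun n (k + 1) x = √(sfun n (k + 1) x / sfun n k x) •
      (-EuclideanSpace.single k.castSucc 1
        + (x k.castSucc / sfun n (k + 1) x) • tailPart (k + 1) x) := by
  have hcoord : coordfun n x k = x k.castSucc := dif_pos (by omega)
  ext r
  simp [efun, tailPart, hcoord, Fin.ext_iff, mul_add]

lemma inner_efun_eq_zero (k : Fin n) (hs : sfun n (k + 1) x ≠ 0) : ⟪efun n (k + 1) x, x⟫_ℝ = 0 := by
  simp [efun_succ, real_inner_smul_left, inner_add_left, inner_neg_left, inner_tailPart_self,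
    EuclideanSpace.inner_single_left, hs]

lemma efun_apply_of_lt {k r : Fin n} (h : r < k) : efun n (k + 1) x r.castSucc = 0 := by
  simp [efun_succ, tailPart, h.ne, h.not_gt]

lemma efun_apply_self (k : Fin n) :
    efun n (k + 1) x k.castSucc = -√(sfun n (k + 1) x / sfun n k x) := by
  simp [efun_succ, tailPart]

lemma linearIndependent_efun (hx : x (Fin.last n) ≠ 0) :
    LinearIndependent ℝ fun k : Fin n => efun n (k + 1) x := by
  let M : Matrix (Fin n) (Fin n) ℝ := of fun k r => efun n (k + 1) x r.castSucc
  have hM : M.IsUpperTriangular := fun k r h => efun_apply_of_lt h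
  have hdiag (k : Fin n) : M k k ≠ 0 := by
    have hpos : 0 < sfun n (k + 1) x / sfun n k x :=
      div_pos (sfun_pos (by simp) hx) (sfun_pos (by simp) hx)
    simpa [M, efun_apply_self] using (Real.sqrt_pos.2 hpos).ne'
  let dropLast : EuclideanSpace ℝ (Fin (n + 1)) →ₗ[ℝ] Fin n → ℝ :=
    LinearMap.funLeft ℝ ℝ Fin.castSucc ∘ₗ (WithLp.linearEquiv 2 ℝ _).toLinearMap
  exact LinearIndependent.of_comp dropLast (linearIndependent_row_of_isUpperTriangular hM hdiag)

lemma span_range_efun (hx : x (Fin.last n) ≠ 0) :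
    Submodule.span ℝ (Set.range fun k : Fin n => efun n (k + 1) x) = (ℝ ∙ x)ᗮ := by
  have hx0 : x ≠ 0 := by
    rintro rfl
    exact hx rfl
  have : Fact (Module.finrank ℝ (EuclideanSpace ℝ (Fin (n + 1))) = n + 1) := ⟨by simp⟩
  refine Submodule.eq_of_le_of_finrank_eq (Submodule.span_le.2 ?_) ?_
  · rintro _ ⟨k, rfl⟩
    rw [SetLike.mem_coe, Submodule.mem_orthogonal_singleton_iff_inner_left]
    exact inner_efun_eq_zero k (sfun_pos (by simp) hx).ne'
  · rw [finrank_span_eq_card (linearIndependent_efun hx),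
      Submodule.finrank_orthogonal_span_singleton (n := n) hx0, Fintype.card_fin]

end SphereFrame

section RollingFamily

variable {n : ℕ} {p : Conf n}

lemma Emat_succ (i k : Fin n) : Emat n (i + 1) (k + 1) = single i k 1 := by
  ext a b
  simp [Emat, single_apply, Fin.ext_iff, eq_comm]

lemma toLp_mulVec_eps (A : Matrix (Fin n) (Fin n) ℝ) (k : Fin n) :
    WithLp.toLp 2 (A *ᵥ (eps n (k + 1)).ofLp) = WithLp.toLp 2 (A.col k) := by
  have heps : (eps n (k + 1)).ofLp = Pi.single k 1 := by
    ext i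
    simp [eps, Pi.single_apply, Fin.ext_iff]
  rw [heps, mulVec_single_one]

lemma transpose_Emat_sub_Emat (i k : ℕ) :
    (Emat n i k - Emat n k i)ᵀ = -(Emat n i k - Emat n k i) := by
  ext a b
  simp [Emat, and_comm]

lemma Xfield_snd_snd_mem_leftTranslatedSkew (k : ℕ) :
    (Xfield n k p).2.2 ∈ leftTranslatedSkew p.2.2 :=
  neg_mem (sum_mem fun i _ => Submodule.smul_mem _ _
    (mem_leftTranslatedSkew.2 ⟨_, transpose_Emat_sub_Emat i k, rfl⟩))

lemma rollFam_eq_sumElim (p : Conf n) :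
    rollFam n p = Sum.elim (fun k : Fin n => Xfield n (k + 1) p)
      (LinearMap.inr ℝ _ _ ∘ verticalFam p.2.2) := by
  funext i
  rcases i with k | q | k
  · rfl
  · simp [rollFam, Yfield, verticalFam, skewSingle, Emat_succ]
  · simp [rollFam, Zfield, verticalFam, toLp_mulVec_eps]

/-- The product `x^⊥ × ℝ^n × A · 𝔰𝔬(n)`, which for `x ∈ S^n` and `A ∈ SO(n)` is the tangent space
of `S^n × ℝ^n × SO(n)` at `p = (x, x̂, A)`. -/
def rollTangentSpace (p : Conf n) : Submodule ℝ (Conf n) :=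
  (ℝ ∙ p.1)ᗮ.prod ((⊤ : Submodule ℝ _).prod (leftTranslatedSkew p.2.2))

lemma coe_rollTangentSpace (p : Conf n) :
    (rollTangentSpace p : Set (Conf n)) = {v : Conf n | ⟪v.1, p.1⟫_ℝ = 0 ∧
      ∃ B : Matrix (Fin n) (Fin n) ℝ, Bᵀ = -B ∧ v.2.2 = p.2.2 * B} := by
  ext v
  simp [rollTangentSpace, Submodule.mem_orthogonal_singleton_iff_inner_left, mem_leftTranslatedSkew]

lemma linearIndependent_rollFam (hx : p.1 (Fin.last n) ≠ 0) (hA : IsUnit p.2.2) :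
    LinearIndependent ℝ (rollFam n p) := by
  rw [rollFam_eq_sumElim]
  exact linearIndependent_sumElim_inr (linearIndependent_efun hx) (linearIndependent_verticalFam hA)

lemma span_range_rollFam (hx : p.1 (Fin.last n) ≠ 0) (hA : IsUnit p.2.2) :
    Submodule.span ℝ (Set.range (rollFam n p)) = rollTangentSpace p := by
  have hspan := span_range_verticalFam hA
  have hX (k : Fin n) :
      (Xfield n (k + 1) p).2 ∈ Submodule.span ℝ (Set.range (verticalFam p.2.2)) := by
    rw [hspan]
    exact ⟨Submodule.mem_top, Xfield_snd_snd_mem_leftTranslatedSkew _⟩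
  calc Submodule.span ℝ (Set.range (rollFam n p))
    _ = (Submodule.span ℝ (Set.range fun k : Fin n => efun n (k + 1) p.1)).prod
          (Submodule.span ℝ (Set.range (verticalFam p.2.2))) :=
      (congrArg (Submodule.span ℝ <| Set.range ·) (rollFam_eq_sumElim p)).trans
        (span_range_sumElim_inr hX)
    _ = rollTangentSpace p := by rw [hspan, span_range_efun hx, rollTangentSpace]

end RollingFamily

theorem statement10_general (n : ℕ) (p : Conf n) (hx : p.1 (Fin.last n) ≠ 0)
    (hA : IsUnit p.2.2) :
    LinearIndependent ℝ (rollFam n p) ∧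
    (Submodule.span ℝ (Set.range (rollFam n p)) : Set (Conf n))
      = {v : Conf n | ⟪v.1, p.1⟫_ℝ = 0 ∧
          ∃ B : Matrix (Fin n) (Fin n) ℝ, Bᵀ = -B ∧ v.2.2 = p.2.2 * B} :=
  ⟨linearIndependent_rollFam hx hA, by rw [span_range_rollFam hx hA, coe_rollTangentSpace]⟩

/-- For `p = (x, x̂, A)` with `x ∈ U ∩ S^n` and `A ∈ SO(n)`, the `n(n+3)/2` vectors
`{X_k(p)}_{k=1}^n ∪ {Y_{lk}(p)}_{1≤l<k≤n} ∪ {Z_k(p)}_{k=1}^n` are linearly independent and span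
`{v : ⟨v, x⟩ = 0} × ℝ^n × {AB : Bᵀ = −B}`, the full tangent space of `S^n × ℝ^n × SO(n)` at `p`. -/
theorem statement10 (n : ℕ) (hn : 1 ≤ n) (p : Conf n)
    (hU : p.1 ∈ Usph n) (hS : p.1 ∈ sph n)
    (hA : p.2.2ᵀ * p.2.2 = 1) (hdet : p.2.2.det = 1) :
    LinearIndependent ℝ (rollFam n p) ∧
    (Submodule.span ℝ (Set.range (rollFam n p)) : Set (Conf n))
      = {v : Conf n | ⟪v.1, p.1⟫_ℝ = 0 ∧
          ∃ B : Matrix (Fin n) (Fin n) ℝ, Bᵀ = -B ∧ v.2.2 = p.2.2 * B} := by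
  have hx : 0 < p.1 (Fin.last n) := by simpa [Usph, coordfun, Fin.last] using hU
  exact statement10_general n p hx.ne' (IsUnit.of_mul_eq_one_right _ hA)
end
end
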